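/- arXiv:2109.09239 — 2 statements merged into one kernel-verified Lean document; each statement's English description precedes it below -/
import Mathlib

section
/- Assume Condition (A1). For every K₁ > 0 and every δ ∈ [0,1) there exist constants A₁, α′₁ > 0, depending only on K₁, δ and the constants C_ξ, H_ξ, α_ξ of (A1), such that for every θ ∈ ℝⁿ: ℙ_θ( |Ĩ(K₁)| ≤ δ·|I_*(A₁,θ)| ) ≤ H₀·e^{−α′₁·ℓ(|I_*(A₁,θ)|)}. -/
open MeasureTheory Finset
open scoped Classical

/-- `ell n k = k * log(q*n/k)` with `q = e^2`; equals `0` at `k = 0` by Lean's conventions. -/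
noncomputable def ell (n k : ℕ) : ℝ := (k : ℝ) * Real.log (Real.exp 2 * n / k)

/-!
If the preselector `I` is much smaller than the active set `S`, then `S \ I` is large, and the
minimality of `S` for `θ` forces `θ` to carry a lot of energy there: removing `S \ I` from `S` would
save a fixed fraction of the penalty `A σ² ℓ(|S|)`. The minimality of `I` for `X` forces `X` to
carry little energy there, since adjoining `S \ I` to `I` costs at most `K σ² ℓ(|S|)`. For `A` large
compared with `K` the difference must be made up by the noise, whose energy on `S` then exceeds
`C |S| + ℓ(|S|)`; the tail bound makes this unlikely.
-/

section Ell

variable {n k s t : ℕ}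

lemma two_le_log_exp_two_mul_div (hs : 0 < s) (hsn : s ≤ n) :
    2 ≤ Real.log (Real.exp 2 * n / s) := by
  have hn : 0 < n := hs.trans_le hsn
  rw [Real.le_log_iff_exp_le (by positivity), le_div_iff₀ (by positivity)]
  gcongr

lemma two_mul_le_ell (hsn : s ≤ n) : 2 * (s : ℝ) ≤ ell n s := by
  rcases s.eq_zero_or_pos with rfl | hs
  · simp [ell]
  · rw [ell, mul_comm]
    gcongr
    exact two_le_log_exp_two_mul_div hs hsn

lemma ell_nonneg (hsn : s ≤ n) : 0 ≤ ell n s :=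
  (by positivity : (0 : ℝ) ≤ 2 * s).trans (two_mul_le_ell hsn)

lemma mul_log_le_ell (hst : s ≤ t) : s * Real.log (Real.exp 2 * n / t) ≤ ell n s := by
  rcases s.eq_zero_or_pos with rfl | hs
  · simp [ell]
  rcases n.eq_zero_or_pos with rfl | hn
  · simp [ell]
  have ht : 0 < t := hs.trans_le hst
  unfold ell
  gcongr

lemma ell_add_le : ell n (s + t) ≤ ell n s + ell n t := by
  have hs : s * Real.log (Real.exp 2 * n / (s + t : ℕ)) ≤ ell n s :=
    mul_log_le_ell (Nat.le_add_right s t)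
  have ht : t * Real.log (Real.exp 2 * n / (s + t : ℕ)) ≤ ell n t :=
    mul_log_le_ell (Nat.le_add_left t s)
  calc ell n (s + t)
      = s * Real.log (Real.exp 2 * n / (s + t : ℕ))
        + t * Real.log (Real.exp 2 * n / (s + t : ℕ)) := by rw [ell, Nat.cast_add, add_mul]
    _ ≤ ell n s + ell n t := add_le_add hs ht

-- The tangent line to the concave function `ell n` at `s` has slope `log (q n / s) - 1`.
lemma sub_mul_log_sub_one_le_ell_sub_ell (hn : 0 < n) (hs : 0 < s) :
    ((s : ℝ) - k) * (Real.log (Real.exp 2 * n / s) - 1) ≤ ell n s - ell n k := by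
  suffices h : k * Real.log (Real.exp 2 * n / k)
      ≤ k * Real.log (Real.exp 2 * n / s) + (s - k) by
    unfold ell
    linarith
  rcases k.eq_zero_or_pos with rfl | hk
  · simp
  calc k * Real.log (Real.exp 2 * n / k)
      = k * Real.log (Real.exp 2 * n / s) + k * Real.log (s / k) := by
        rw [← mul_add, ← Real.log_mul (by positivity) (by positivity)]
        field_simp
    _ ≤ k * Real.log (Real.exp 2 * n / s) + k * (s / k - 1) := by
        gcongr
        exact Real.log_le_sub_one_of_pos (by positivity)
    _ = k * Real.log (Real.exp 2 * n / s) + (s - k) := by field_simp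

lemma ell_mono (hks : k ≤ s) (hsn : s ≤ n) : ell n k ≤ ell n s := by
  rcases s.eq_zero_or_pos with rfl | hs
  · rw [Nat.le_zero.mp hks]
  have hslope : 0 ≤ Real.log (Real.exp 2 * n / s) - 1 := by
    linarith [two_le_log_exp_two_mul_div hs hsn]
  have hgap : (0 : ℝ) ≤ s - k := sub_nonneg.mpr (Nat.cast_le.mpr hks)
  exact sub_nonneg.mp <| (mul_nonneg hgap hslope).trans <|
    sub_mul_log_sub_one_le_ell_sub_ell (hs.trans_le hsn) hs

lemma half_one_sub_mul_ell_le_ell_sub_ell {δ : ℝ} (hδ : δ ≤ 1) (hsn : s ≤ n)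
    (hk : (k : ℝ) ≤ δ * s) : (1 - δ) / 2 * ell n s ≤ ell n s - ell n k := by
  rcases s.eq_zero_or_pos with rfl | hs
  · obtain rfl : k = 0 := by simpa using hk
    simp [ell]
  have hlog := two_le_log_exp_two_mul_div hs hsn
  have hgap : (1 - δ) * s ≤ s - k := by linarith
  calc (1 - δ) / 2 * ell n s
      = (1 - δ) * s * (Real.log (Real.exp 2 * n / s) / 2) := by unfold ell; ring
    _ ≤ (s - k) * (Real.log (Real.exp 2 * n / s) - 1) := by
        have hgap_nonneg : 0 ≤ (s : ℝ) - k :=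
          (mul_nonneg (sub_nonneg.mpr hδ) s.cast_nonneg).trans hgap
        gcongr
        linarith
    _ ≤ ell n s - ell n k := sub_mul_log_sub_one_le_ell_sub_ell (hs.trans_le hsn) hs

end Ell

section PenalizedSelection

variable {ι : Type*} [Fintype ι] [DecidableEq ι]

/-- `I` is a minimizer of the penalized selection criterion `I ↦ ∑ i ∉ I, f i + pen I`. The
preselector and the active set are the cases `f = X ^ 2` and `f = θ ^ 2` with penalties proportional
to `ℓ(|I|)`; ties may be broken in any way. -/
def IsPenalizedMin {G : Type*} [AddCommMonoid G] [LE G] (f : ι → G) (pen : Finset ι → G)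
    (I : Finset ι) : Prop :=
  ∀ J : Finset ι, ∑ i ∈ Iᶜ, f i + pen I ≤ ∑ i ∈ Jᶜ, f i + pen J

section OrderedGroup

variable {G : Type*} [AddCommGroup G] [PartialOrder G] [IsOrderedAddMonoid G]
  {f : ι → G} {pen : Finset ι → G} {I : Finset ι}

lemma IsPenalizedMin.sum_sdiff_le (hI : IsPenalizedMin f pen I) (J : Finset ι) :
    ∑ i ∈ J \ I, f i ≤ pen (I ∪ J) - pen I := by
  have hsplit : ∑ i ∈ Iᶜ, f i = ∑ i ∈ (I ∪ J)ᶜ, f i + ∑ i ∈ J \ I, f i := by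
    rw [← sum_sdiff (compl_subset_compl.mpr (subset_union_left (s₂ := J))), compl_sdiff_compl,
      union_sdiff_left, add_comm]
  have hmin := hI (I ∪ J)
  rw [hsplit, add_assoc, add_le_add_iff_left] at hmin
  exact le_sub_iff_add_le.mpr hmin

lemma IsPenalizedMin.le_sum_sdiff (hI : IsPenalizedMin f pen I) (J : Finset ι) :
    pen I - pen (I ∩ J) ≤ ∑ i ∈ I \ J, f i := by
  have hsplit : ∑ i ∈ (I ∩ J)ᶜ, f i = ∑ i ∈ Iᶜ, f i + ∑ i ∈ I \ J, f i := by
    rw [← sum_sdiff (compl_subset_compl.mpr (inter_subset_left (s₂ := J))), compl_sdiff_compl,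
      sdiff_inter_self_left, add_comm]
  have hmin := hI (I ∩ J)
  rw [hsplit, add_assoc, add_le_add_iff_left] at hmin
  exact sub_le_iff_le_add.mpr hmin

end OrderedGroup

variable {x θ : ι → ℝ} {I S : Finset ι} {n : ℕ} {a κ δ : ℝ}

lemma IsPenalizedMin.sum_sdiff_le_mul_ell (hn : Fintype.card ι ≤ n) (hκ : 0 ≤ κ)
    (hI : IsPenalizedMin (x ^ 2) (fun J ↦ κ * ell n #J) I) (S : Finset ι) :
    ∑ i ∈ S \ I, x i ^ 2 ≤ κ * ell n #S := by
  have hunion : ell n #(I ∪ S) ≤ ell n #I + ell n #S := by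
    calc ell n #(I ∪ S)
        = ell n (#I + #(S \ I)) := by
          rw [← union_sdiff_self_eq_union, card_union_of_disjoint disjoint_sdiff]
      _ ≤ ell n #I + ell n #(S \ I) := ell_add_le
      _ ≤ ell n #I + ell n #S := by
        gcongr
        exact ell_mono (card_le_card sdiff_subset) ((card_le_univ S).trans hn)
  calc ∑ i ∈ S \ I, x i ^ 2
      ≤ κ * ell n #(I ∪ S) - κ * ell n #I := hI.sum_sdiff_le S
    _ = κ * (ell n #(I ∪ S) - ell n #I) := by ring
    _ ≤ κ * ell n #S := by
      gcongr
      linarith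

lemma IsPenalizedMin.mul_ell_le_sum_sdiff (hn : Fintype.card ι ≤ n) (ha : 0 ≤ a) (hδ : δ ≤ 1)
    (hS : IsPenalizedMin (θ ^ 2) (fun J ↦ a * ell n #J) S) (hcard : (#I : ℝ) ≤ δ * #S) :
    a * ((1 - δ) / 2 * ell n #S) ≤ ∑ i ∈ S \ I, θ i ^ 2 := by
  have hinter : (#(S ∩ I) : ℝ) ≤ δ * #S :=
    (Nat.cast_le.mpr (card_le_card inter_subset_right)).trans hcard
  calc a * ((1 - δ) / 2 * ell n #S)
      ≤ a * (ell n #S - ell n #(S ∩ I)) := by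
        gcongr
        exact half_one_sub_mul_ell_le_ell_sub_ell hδ ((card_le_univ S).trans hn) hinter
    _ = a * ell n #S - a * ell n #(S ∩ I) := mul_sub ..
    _ ≤ ∑ i ∈ S \ I, θ i ^ 2 := hS.le_sum_sdiff I

lemma IsPenalizedMin.mul_ell_le_sum_sub_sq (hn : Fintype.card ι ≤ n) (hκ : 0 ≤ κ) (ha : 0 ≤ a)
    (hδ : δ ≤ 1) (hI : IsPenalizedMin (x ^ 2) (fun J ↦ κ * ell n #J) I)
    (hS : IsPenalizedMin (θ ^ 2) (fun J ↦ a * ell n #J) S)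
    (hcard : (#I : ℝ) ≤ δ * #S) :
    (a * (1 - δ) / 4 - κ) * ell n #S ≤ ∑ i ∈ S, (x i - θ i) ^ 2 := by
  have hpoint (i : ι) : θ i ^ 2 ≤ 2 * (x i ^ 2 + (x i - θ i) ^ 2) := by
    simpa [sub_sq_comm] using add_sq_le (a := x i) (b := θ i - x i)
  have hsum : ∑ i ∈ S \ I, θ i ^ 2
      ≤ 2 * (∑ i ∈ S \ I, x i ^ 2 + ∑ i ∈ S \ I, (x i - θ i) ^ 2) := by
    rw [← sum_add_distrib, mul_sum]
    exact sum_le_sum fun i _ ↦ hpoint i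
  have hsub : ∑ i ∈ S \ I, (x i - θ i) ^ 2 ≤ ∑ i ∈ S, (x i - θ i) ^ 2 :=
    sum_le_sum_of_subset_of_nonneg sdiff_subset fun _ _ _ ↦ sq_nonneg _
  linarith [hI.sum_sdiff_le_mul_ell hn hκ S, hS.mul_ell_le_sum_sdiff hn ha hδ hcard]

end PenalizedSelection

section NoiseTail

variable {Ω ι : Type*} [MeasurableSpace Ω]

/-- Condition (A1) for one measure `μ` and a random vector `ξ`: the energy of `ξ` on any set `I` of
coordinates exceeds `C |I|` by `M` with `μ`-measure at most `H e^{-α M}`. -/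
def HasEnergyTail (μ : Measure Ω) (ξ : Ω → ι → ℝ) (C H α : ℝ) : Prop :=
  ∀ (I : Finset ι) (M : ℝ), 0 ≤ M →
    μ {ω | C * #I + M ≤ ∑ i ∈ I, ξ ω i ^ 2} ≤ ENNReal.ofReal (H * Real.exp (-α * M))

variable [Fintype ι] [DecidableEq ι]

theorem stmt_3_general {μ : Measure Ω} {X : Ω → ι → ℝ} {θ : ι → ℝ} {n : ℕ} {σ C H α K A δ : ℝ}
    (hn : Fintype.card ι ≤ n) (hσ : 0 < σ) (hC : 0 ≤ C) (hK : 0 ≤ K) (hδ : δ < 1)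
    (hA : 4 * (C + 1 + K) / (1 - δ) ≤ A)
    (htail : HasEnergyTail μ (fun ω i ↦ (X ω i - θ i) / σ) C H α) {Itil : Ω → Finset ι}
    (hItil : ∀ ω, IsPenalizedMin (X ω ^ 2) (fun J ↦ K * σ ^ 2 * ell n #J) (Itil ω))
    {S : Finset ι} (hS : IsPenalizedMin (θ ^ 2) (fun J ↦ A * σ ^ 2 * ell n #J) S) :
    μ {ω | (#(Itil ω) : ℝ) ≤ δ * #S} ≤ ENNReal.ofReal (H * Real.exp (-α * ell n #S)) := by
  have hSn : #S ≤ n := (card_le_univ S).trans hn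
  have hell : 0 ≤ ell n #S := ell_nonneg hSn
  have hcard_le_ell : (#S : ℝ) ≤ ell n #S := by
    linarith [two_mul_le_ell hSn, (#S).cast_nonneg (α := ℝ)]
  have hδ' : 0 < 1 - δ := sub_pos.mpr hδ
  have hA_nonneg : 0 ≤ A := hA.trans' (by positivity)
  have hAK : C + 1 ≤ A * (1 - δ) / 4 - K := by
    linarith [(div_le_iff₀ hδ').mp hA]
  refine (measure_mono fun ω (hω : (#(Itil ω) : ℝ) ≤ δ * #S) ↦ ?_).trans (htail S _ hell)
  have hnoise := (hItil ω).mul_ell_le_sum_sub_sq hn (by positivity) (by positivity) hδ.le hS hω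
  calc C * #S + ell n #S
    _ ≤ C * ell n #S + ell n #S := by gcongr
    _ = (C + 1) * ell n #S := by ring
    _ ≤ (A * (1 - δ) / 4 - K) * ell n #S := by gcongr
    _ = (A * σ ^ 2 * (1 - δ) / 4 - K * σ ^ 2) * ell n #S / σ ^ 2 := by field_simp
    _ ≤ (∑ i ∈ S, (X ω i - θ i) ^ 2) / σ ^ 2 := by gcongr
    _ = ∑ i ∈ S, ((X ω i - θ i) / σ) ^ 2 := by simp only [sum_div, div_pow]

end NoiseTail

theorem stmt_3 (Cξ Hξ αξ : ℝ) (hCξ : 0 < Cξ) (hHξ : 0 < Hξ) (hαξ : 0 < αξ) (K₁ δ : ℝ) (hK₁ : 0 < K₁) (hδ : 0 ≤ δ) (hδ1 : δ < 1) :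
    ∃ A₁ α₁' : ℝ, 0 < A₁ ∧ 0 < α₁' ∧
      ∀ (n : ℕ) (σ : ℝ), 0 < σ →
        ∀ P : (Fin n → ℝ) → Measure (Fin n → ℝ),
          (∀ θ, IsProbabilityMeasure (P θ)) →
          (∀ (θ : Fin n → ℝ) (I : Finset (Fin n)) (M : ℝ), 0 ≤ M →
            P θ {x | Cξ * I.card + M ≤ ∑ i ∈ I, ((x i - θ i) / σ) ^ 2}
              ≤ ENNReal.ofReal (Hξ * Real.exp (-αξ * M))) →
          ∀ Itil : (Fin n → ℝ) → Finset (Fin n),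
            (∀ (x : Fin n → ℝ) (I : Finset (Fin n)),
              (∑ i ∈ (Itil x)ᶜ, x i ^ 2) + K₁ * σ ^ 2 * ell n (Itil x).card
                ≤ (∑ i ∈ Iᶜ, x i ^ 2) + K₁ * σ ^ 2 * ell n I.card) →
            ∀ (θ : Fin n → ℝ) (Istar : Finset (Fin n)),
              (∀ I : Finset (Fin n),
                (∑ i ∈ Istarᶜ, θ i ^ 2) + A₁ * σ ^ 2 * ell n Istar.card
                  ≤ (∑ i ∈ Iᶜ, θ i ^ 2) + A₁ * σ ^ 2 * ell n I.card) →
              P θ {x | ((Itil x).card : ℝ) ≤ δ * Istar.card}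
                ≤ ENNReal.ofReal (Hξ / (1 - Real.exp (-1)) * Real.exp (-α₁' * ell n Istar.card)) := by
  have hH : Hξ ≤ Hξ / (1 - Real.exp (-1)) :=
    le_div_self hHξ.le (by simp) (by simp [Real.exp_nonneg])
  refine ⟨4 * (Cξ + 1 + K₁) / (1 - δ), αξ, div_pos (by positivity) (sub_pos.mpr hδ1), hαξ, ?_⟩
  intro n σ hσ P _ hA1 Itil hItil θ Istar hIstar
  exact (stmt_3_general (Fintype.card_fin n).le hσ hCξ.le hK₁.le hδ1 le_rfl (hA1 θ) hItil
    hIstar).trans (by gcongr)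
end

section
/- Assume Condition (A1) and the standing assumptions. Then there exist constants H₁, α₂, H₂, α₃ > 0, depending only on the constants of (A1) and of the standing assumptions, such that for every integer k ≥ 1 and every θ ∈ ℝⁿ: (k-family-wise error rate) ℙ_θ( |Î(K)∖I^*| ≥ k ) ≤ (H₁/k)·(n − |I^*|)·(n/(|I^*| ∨ 1))^{−α₂}, and (k-family-wise non-discovery rate) ℙ_θ( |I_*∖Î(K)| ≥ k ) ≤ (H₂/k)·|I_*|·(n/(|I_*| ∨ 1))^{−α₃}. -/
open MeasureTheory Finset
open scoped Classical

/-- The selector `Î(K)`: empty if the preselector `Ĩ(K)` is empty, otherwise all coordinates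
with `X_i² ≥ K σ² log(q n / |Ĩ(K)|)`, where `q = e²`. -/
noncomputable def ihat {n : ℕ} (K σ : ℝ) (Itil : (Fin n → ℝ) → Finset (Fin n))
    (x : Fin n → ℝ) : Finset (Fin n) :=
  if Itil x = ∅ then ∅
  else Finset.univ.filter fun i =>
    K * σ ^ 2 * Real.log (Real.exp 2 * (n : ℝ) / (Itil x).card) ≤ (x i) ^ 2

/-!
A penalized minimizer `J` separates the coordinates of `θ`: adding one index to `J` or removing one
does not decrease the criterion, so `θ i ^ 2 ≲ A σ² L` off `J` and `θ i ^ 2 ≳ A σ² L` on `J`, where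
`L = log (q n / |J|)`. When the preselected set has size comparable to `J`, the selector thresholds
`x i ^ 2` at about `K σ² L`. The gaps between `A₀`, `K` and `A₁` then force every wrongly treated
coordinate to carry squared noise exceeding a positive multiple of `L`, up to an additive constant.
Such noise has probability at most a constant times a negative power of `n / |J|`, and Markov's
inequality for the number of wrongly treated coordinates gives the factor `1 / k`.
-/

/-- The logarithmic factor `log (q n / m)`, `q = e²`, shared by the penalty `ell` and by the
threshold of the selector `ihat`; `logFactor n 0 = 0` by the conventions for division and `log`. -/
noncomputable def logFactor (n m : ℕ) : ℝ := Real.log (Real.exp 2 * n / m)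

lemma ell_eq_mul_logFactor (n m : ℕ) : ell n m = m * logFactor n m := rfl

section LogFactor

variable {n m : ℕ}

lemma logFactor_eq (hn : n ≠ 0) (hm : m ≠ 0) :
    logFactor n m = 2 + Real.log n - Real.log m := by
  rw [logFactor, Real.log_div (by positivity) (by positivity),
    Real.log_mul (by positivity) (by positivity), Real.log_exp]

lemma logFactor_anti (hn : n ≠ 0) (hm : m ≠ 0) {l : ℕ} (hml : m ≤ l) :
    logFactor n l ≤ logFactor n m := by
  rw [logFactor_eq hn hm, logFactor_eq hn (by omega)]
  gcongr

lemma two_le_logFactor (hm : m ≠ 0) (hmn : m ≤ n) : 2 ≤ logFactor n m := by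
  have hlog : Real.log m ≤ Real.log n := by gcongr
  rw [logFactor_eq (by omega) hm]
  linarith

lemma ell_nonneg_s7 (hmn : m ≤ n) : 0 ≤ ell n m := by
  rcases eq_or_ne m 0 with rfl | hm
  · simp [ell]
  · exact mul_nonneg m.cast_nonneg (zero_le_two.trans (two_le_logFactor hm hmn))

lemma logFactor_le_ell (hm : m ≠ 0) (hmn : m ≤ n) : logFactor n m ≤ ell n m :=
  le_mul_of_one_le_left (zero_le_two.trans (two_le_logFactor hm hmn))
    (by exact_mod_cast Nat.one_le_iff_ne_zero.2 hm)

lemma mul_logFactor_succ_le_ell (hn : n ≠ 0) : m * logFactor n (m + 1) ≤ ell n m := by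
  rcases eq_or_ne m 0 with rfl | hm
  · simp [ell]
  · exact mul_le_mul_of_nonneg_left (logFactor_anti hn hm m.le_succ) m.cast_nonneg

lemma ell_le_mul_logFactor_succ_add_one (hn : n ≠ 0) :
    ell n m ≤ m * logFactor n (m + 1) + 1 := by
  rcases eq_or_ne m 0 with rfl | hm
  · simp [ell]
  · have hlog : Real.log (m + 1) - Real.log m ≤ (m + 1) / m - 1 := by
      rw [← Real.log_div (by positivity) (by positivity)]
      exact Real.log_le_sub_one_of_pos (by positivity)
    have hdiff : logFactor n m - logFactor n (m + 1) ≤ 1 / m := by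
      rw [logFactor_eq hn hm, logFactor_eq hn m.succ_ne_zero]
      calc _ = Real.log (m + 1) - Real.log m := by push_cast; ring
        _ ≤ (m + 1) / m - 1 := hlog
        _ = 1 / m := by field_simp; ring
    rw [le_div_iff₀ (by positivity)] at hdiff
    rw [ell_eq_mul_logFactor]
    linarith

lemma ell_succ_sub_ell_le (hn : n ≠ 0) : ell n (m + 1) - ell n m ≤ logFactor n (m + 1) := by
  rw [ell_eq_mul_logFactor n (m + 1), Nat.cast_succ]
  linarith [mul_logFactor_succ_le_ell (m := m) hn]

lemma half_logFactor_le_ell_succ_sub_ell (hmn : m + 1 ≤ n) :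
    logFactor n (m + 1) / 2 ≤ ell n (m + 1) - ell n m := by
  rw [ell_eq_mul_logFactor n (m + 1), Nat.cast_succ]
  linarith [ell_le_mul_logFactor_succ_add_one (n := n) (m := m) (by omega),
    two_le_logFactor m.succ_ne_zero hmn]

lemma logFactor_le_add_log_inv {δ : ℝ} {t : ℕ} (hn : n ≠ 0) (hm : m ≠ 0) (hδ : 0 < δ)
    (ht : δ * m ≤ t) : logFactor n t ≤ logFactor n m + Real.log δ⁻¹ := by
  have ht₀ : (0 : ℝ) < t := lt_of_lt_of_le (by positivity) ht
  have hlog : Real.log δ + Real.log m ≤ Real.log t := by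
    rw [← Real.log_mul (by positivity) (by positivity)]
    exact Real.log_le_log (by positivity) ht
  rw [logFactor_eq hn hm, logFactor_eq hn (by exact_mod_cast ht₀.ne'), Real.log_inv]
  linarith

/-- The additive term `logFactor n m` in the size bound costs only an arbitrarily small fraction
of `logFactor n m`, since `log y ≤ ε y - log ε`. -/
lemma sub_log_le_logFactor {M ε : ℝ} {t : ℕ} (hm : m ≠ 0) (hmn : m ≤ n) (hM : 0 ≤ M) (hε : 0 < ε)
    (ht₀ : t ≠ 0) (ht : t ≤ M * m + logFactor n m) :
    (1 - ε) * logFactor n m - Real.log ((M + 1) / ε) ≤ logFactor n t := by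
  have hL := two_le_logFactor hm hmn
  have hn : n ≠ 0 := by omega
  rw [logFactor_eq hn ht₀]
  set L := logFactor n m with hL_def
  rw [logFactor_eq hn hm] at hL_def
  have hm₁ : (1 : ℝ) ≤ m := by exact_mod_cast Nat.one_le_iff_ne_zero.2 hm
  have ht_mul : t ≤ (M + 1) * m * L := by
    calc (t : ℝ) ≤ M * m * 1 + 1 * L := by linarith
      _ ≤ M * m * L + m * L := by gcongr; linarith
      _ = (M + 1) * m * L := by ring
  have hlog_t : Real.log t ≤ Real.log (M + 1) + Real.log m + Real.log L := by
    rw [← Real.log_mul (by positivity) (by positivity),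
      ← Real.log_mul (by positivity) (by positivity)]
    exact Real.log_le_log (by positivity) ht_mul
  have hlog_L : Real.log ε + Real.log L ≤ ε * L := by
    rw [← Real.log_mul (by positivity) (by positivity)]
    linarith [Real.log_le_sub_one_of_pos (show 0 < ε * L by positivity)]
  rw [Real.log_div (by positivity) hε.ne']
  linarith

lemma exp_neg_mul_logFactor_le_rpow {a b : ℝ} (hm : m ≠ 0) (hmn : m ≤ n) (hb : 0 ≤ b)
    (hba : b ≤ a) : Real.exp (-a * logFactor n m) ≤ ((n : ℝ) / m) ^ (-b) := by
  have hn : n ≠ 0 := by omega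
  have hlog : Real.log (n / m) ≤ logFactor n m := by
    rw [logFactor_eq hn hm, Real.log_div (by positivity) (by positivity)]
    linarith
  rw [Real.rpow_def_of_pos (by positivity), Real.exp_le_exp]
  calc -a * logFactor n m ≤ -b * logFactor n m := by
        gcongr
        exact zero_le_two.trans (two_le_logFactor hm hmn)
    _ ≤ -b * Real.log (n / m) := mul_le_mul_of_nonpos_left hlog (by linarith)
    _ = Real.log (n / m) * -b := mul_comm _ _

end LogFactor

section PenalizedMinimizer

variable {n : ℕ} {θ x : Fin n → ℝ} {κ σ A C K : ℝ} {J : Finset (Fin n)} {i : Fin n}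
  {Itil : (Fin n → ℝ) → Finset (Fin n)}

/-- `J` minimizes the penalized criterion `I ↦ ∑_{i ∉ I} θ i ^ 2 + κ ℓ(|I|)`; the active set
`I_*(A, θ)` is such a `J` for `κ = A σ²`. -/
def IsPenalizedMinimizer {n : ℕ} (κ : ℝ) (θ : Fin n → ℝ) (J : Finset (Fin n)) : Prop :=
  ∀ I : Finset (Fin n),
    (∑ i ∈ Jᶜ, θ i ^ 2) + κ * ell n J.card ≤ (∑ i ∈ Iᶜ, θ i ^ 2) + κ * ell n I.card

lemma IsPenalizedMinimizer.sq_le_of_notMem (hJ : IsPenalizedMinimizer κ θ J) (hκ : 0 ≤ κ)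
    (hi : i ∉ J) : θ i ^ 2 ≤ κ * logFactor n (max J.card 1) := by
  have hn : n ≠ 0 := i.pos.ne'
  have hinsert := hJ (insert i J)
  rw [card_insert_of_notMem hi, compl_insert] at hinsert
  have hsum := add_sum_erase Jᶜ (fun j => θ j ^ 2) (mem_compl.2 hi)
  calc θ i ^ 2 ≤ κ * (ell n (J.card + 1) - ell n J.card) := by linarith
    _ ≤ κ * logFactor n (J.card + 1) := by gcongr; exact ell_succ_sub_ell_le hn
    _ ≤ κ * logFactor n (max J.card 1) := by
      gcongr
      exact logFactor_anti hn (by omega) (by omega)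

lemma IsPenalizedMinimizer.le_sq_of_mem (hJ : IsPenalizedMinimizer κ θ J) (hκ : 0 ≤ κ)
    (hi : i ∈ J) : κ / 2 * logFactor n J.card ≤ θ i ^ 2 := by
  have herase := hJ (J.erase i)
  rw [compl_erase, sum_insert (by simpa using hi)] at herase
  have hcard : (J.erase i).card + 1 = J.card := card_erase_add_one hi
  have hJn : J.card ≤ n := by simpa using card_le_univ J
  have hell := half_logFactor_le_ell_succ_sub_ell (hcard.trans_le hJn)
  rw [hcard] at hell
  calc κ / 2 * logFactor n J.card = κ * (logFactor n J.card / 2) := by ring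
    _ ≤ κ * (ell n J.card - ell n (J.erase i).card) := by gcongr
    _ ≤ θ i ^ 2 := by linarith

lemma mem_ihat_iff : i ∈ ihat K σ Itil x ↔
    (Itil x).Nonempty ∧ K * σ ^ 2 * logFactor n (Itil x).card ≤ x i ^ 2 := by
  rw [ihat, logFactor]
  split_ifs with h
  · simp [h]
  · simp [nonempty_iff_ne_empty.2 h]

lemma sub_le_sq_div_of_sq_le_of_le_sq {u v a b s : ℝ} (hs : s ≠ 0) (hu : u ^ 2 ≤ a * s ^ 2)
    (hv : b * s ^ 2 ≤ v ^ 2) : b / 2 - a ≤ ((v - u) / s) ^ 2 := by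
  rw [div_pow, le_div_iff₀ (by positivity)]
  linarith [sq_nonneg (v - 2 * u)]

lemma sub_le_sq_div_of_le_sq_of_sq_le {u v a b s : ℝ} (hs : s ≠ 0) (hu : a * s ^ 2 ≤ u ^ 2)
    (hv : v ^ 2 ≤ b * s ^ 2) : a / 3 - b / 2 ≤ ((v - u) / s) ^ 2 := by
  rw [div_pow, le_div_iff₀ (by positivity)]
  linarith [sq_nonneg (3 * v - 2 * u)]

lemma IsPenalizedMinimizer.le_sq_noise_of_mem_ihat_sdiff {M ε : ℝ}
    (hJ : IsPenalizedMinimizer (A * σ ^ 2) θ J) (hσ : σ ≠ 0) (hA : 0 ≤ A) (hC : 0 ≤ C) (hK : 0 ≤ K)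
    (hM : 0 ≤ M) (hε : 0 < ε)
    (hcard : ((Itil x).card : ℝ) ≤ M * J.card + logFactor n (max J.card 1))
    (hi : i ∈ ihat K σ Itil x \ J) :
    C + ((K / 2 * (1 - ε) - A - C / 2) * logFactor n (max J.card 1)
        - K / 2 * Real.log ((M + 1) / ε)) ≤ ((x i - θ i) / σ) ^ 2 := by
  obtain ⟨hi_ihat, hiJ⟩ := mem_sdiff.1 hi
  obtain ⟨hItil, hx⟩ := mem_ihat_iff.1 hi_ihat
  have hmn : max J.card 1 ≤ n := max_le (by simpa using card_le_univ J) i.pos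
  set m := max J.card 1
  have hm : m ≠ 0 := by omega
  have hθ : θ i ^ 2 ≤ A * logFactor n m * σ ^ 2 := by
    linarith [hJ.sq_le_of_notMem (by positivity) hiJ]
  have hx' : K * logFactor n (Itil x).card * σ ^ 2 ≤ x i ^ 2 := by linarith
  have hnoise := sub_le_sq_div_of_sq_le_of_le_sq hσ hθ hx'
  have hJm : (J.card : ℝ) ≤ m := by exact_mod_cast le_max_left _ _
  have hcard_m : ((Itil x).card : ℝ) ≤ M * m + logFactor n m := by
    linarith [mul_le_mul_of_nonneg_left hJm hM]
  have hCL := mul_le_mul_of_nonneg_left (two_le_logFactor hm hmn) hC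
  calc C + ((K / 2 * (1 - ε) - A - C / 2) * logFactor n m - K / 2 * Real.log ((M + 1) / ε))
      ≤ K / 2 * ((1 - ε) * logFactor n m - Real.log ((M + 1) / ε)) - A * logFactor n m := by
        linarith
    _ ≤ K / 2 * logFactor n (Itil x).card - A * logFactor n m := by
        gcongr
        exact sub_log_le_logFactor hm hmn hM hε hItil.card_ne_zero hcard_m
    _ = K * logFactor n (Itil x).card / 2 - A * logFactor n m := by ring
    _ ≤ ((x i - θ i) / σ) ^ 2 := hnoise

lemma IsPenalizedMinimizer.le_sq_noise_of_mem_sdiff_ihat {δ : ℝ}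
    (hJ : IsPenalizedMinimizer (A * σ ^ 2) θ J) (hσ : σ ≠ 0) (hA : 0 ≤ A) (hC : 0 ≤ C) (hK : 0 ≤ K)
    (hδ : 0 < δ) (hcard : δ * J.card ≤ (Itil x).card) (hi : i ∈ J \ ihat K σ Itil x) :
    C + ((A / 6 - K / 2 - C / 2) * logFactor n J.card - K / 2 * Real.log δ⁻¹)
      ≤ ((x i - θ i) / σ) ^ 2 := by
  obtain ⟨hiJ, hi_ihat⟩ := mem_sdiff.1 hi
  have hJ₀ : J.card ≠ 0 := card_ne_zero_of_mem hiJ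
  have hJn : J.card ≤ n := by simpa using card_le_univ J
  have hItil : (Itil x).Nonempty := by
    have : (0 : ℝ) < (Itil x).card := lt_of_lt_of_le (by positivity) hcard
    exact card_pos.1 (by exact_mod_cast this)
  have hx : x i ^ 2 ≤ K * logFactor n (Itil x).card * σ ^ 2 := by
    have hlt := not_le.1 fun hle => hi_ihat (mem_ihat_iff.2 ⟨hItil, hle⟩)
    linarith
  have hθ : A / 2 * logFactor n J.card * σ ^ 2 ≤ θ i ^ 2 := by
    linarith [hJ.le_sq_of_mem (by positivity) hiJ]
  have hnoise := sub_le_sq_div_of_le_sq_of_sq_le hσ hθ hx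
  have hCL := mul_le_mul_of_nonneg_left (two_le_logFactor hJ₀ hJn) hC
  calc C + ((A / 6 - K / 2 - C / 2) * logFactor n J.card - K / 2 * Real.log δ⁻¹)
      ≤ A / 6 * logFactor n J.card - K / 2 * (logFactor n J.card + Real.log δ⁻¹) := by linarith
    _ ≤ A / 6 * logFactor n J.card - K / 2 * logFactor n (Itil x).card := by
        gcongr
        exact logFactor_le_add_log_inv i.pos.ne' hJ₀ hδ hcard
    _ = A / 2 * logFactor n J.card / 3 - K * logFactor n (Itil x).card / 2 := by ring
    _ ≤ ((x i - θ i) / σ) ^ 2 := hnoise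

end PenalizedMinimizer

section RandomFinset

variable {Ω ι : Type*} {S : Ω → Finset ι} {J : Finset ι} {k : ℕ}

lemma setOf_le_card_eq_empty (hSJ : ∀ ω, S ω ⊆ J) (hJk : J.card < k) :
    {ω | k ≤ (S ω).card} = ∅ :=
  Set.eq_empty_of_forall_notMem fun ω hω => ((card_le_card (hSJ ω)).trans_lt hJk).not_ge hω

variable [MeasurableSpace Ω] {μ : Measure Ω} {B : Set Ω}

lemma measure_le_card_filter_mem_le (J : Finset ι) (E : ι → Set Ω) (hk : k ≠ 0) :
    μ {ω | k ≤ (J.filter fun i => ω ∈ E i).card} ≤ (∑ i ∈ J, μ (E i)) / k := by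
  let T i := toMeasurable μ (E i)
  have hT i : MeasurableSet (T i) := measurableSet_toMeasurable μ (E i)
  let count : Ω → ENNReal := fun ω => ∑ i ∈ J, (T i).indicator 1 ω
  have hcount : Measurable count := J.measurable_sum fun i _ => measurable_one.indicator (hT i)
  have hle ω : ((J.filter fun i => ω ∈ E i).card : ENNReal) ≤ count ω := by
    rw [card_filter, Nat.cast_sum]
    refine sum_le_sum fun i _ => ?_
    split_ifs with hω
    · simp [T, Set.indicator_of_mem (subset_toMeasurable μ (E i) hω)]
    · simp
  have hlintegral : ∫⁻ ω, count ω ∂μ = ∑ i ∈ J, μ (E i) := by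
    rw [lintegral_finsetSum J fun i _ => measurable_one.indicator (hT i)]
    exact sum_congr rfl fun i _ =>
      (lintegral_indicator_one (hT i)).trans (measure_toMeasurable (E i))
  calc μ {ω | k ≤ (J.filter fun i => ω ∈ E i).card} ≤ μ {ω | (k : ENNReal) ≤ count ω} :=
        measure_mono fun ω (hω : k ≤ _) => (Nat.cast_le.2 hω).trans (hle ω)
    _ ≤ (∫⁻ ω, count ω ∂μ) / k :=
        meas_ge_le_lintegral_div hcount.aemeasurable (by exact_mod_cast hk) (by finiteness)
    _ = (∑ i ∈ J, μ (E i)) / k := by rw [hlintegral]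

lemma measure_le_card_le_of_subset {E : ι → Set Ω} {c : ENNReal} (hk : k ≠ 0)
    (hSJ : ∀ ω, S ω ⊆ J) (hSE : ∀ ω ∉ B, ∀ i ∈ S ω, ω ∈ E i) (hE : ∀ i ∈ J, μ (E i) ≤ c) :
    μ {ω | k ≤ (S ω).card} ≤ (μ B + c) * (J.card / k) := by
  rcases lt_or_ge J.card k with hJk | hkJ
  · simp [setOf_le_card_eq_empty hSJ hJk]
  have hratio : (1 : ENNReal) ≤ J.card / k := by
    rw [ENNReal.le_div_iff_mul_le (by simp [hk]) (by simp), one_mul]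
    exact_mod_cast hkJ
  have hsub : {ω | k ≤ (S ω).card} ⊆ B ∪ {ω | k ≤ (J.filter fun i => ω ∈ E i).card} := by
    intro ω hω
    by_cases hωB : ω ∈ B
    · exact Or.inl hωB
    · exact Or.inr <| le_trans (show k ≤ (S ω).card from hω) <| card_le_card fun i hi =>
        mem_filter.2 ⟨hSJ ω hi, hSE ω hωB i hi⟩
  calc μ {ω | k ≤ (S ω).card}
      ≤ μ B + μ {ω | k ≤ (J.filter fun i => ω ∈ E i).card} :=
        (measure_mono hsub).trans (measure_union_le _ _)
    _ ≤ μ B * 1 + (∑ i ∈ J, μ (E i)) / k := by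
        rw [mul_one]
        gcongr
        exact measure_le_card_filter_mem_le J E hk
    _ ≤ μ B * (J.card / k) + (J.card * c) / k := by
        gcongr
        exact (sum_le_card_nsmul J _ c hE).trans_eq (nsmul_eq_mul _ _)
    _ = (μ B + c) * (J.card / k) := by
        rw [add_mul, mul_comm (J.card : ENNReal) c, mul_div_assoc]

/-- `Z` has an exponential upper tail above the level `C`: condition (A1) says that
`∑ i ∈ I, ξ i ^ 2` has one above `Cξ |I|`, for every index set `I`. -/
def HasExpTail (μ : Measure Ω) (Z : Ω → ℝ) (C H α : ℝ) : Prop :=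
  ∀ M : ℝ, 0 ≤ M → μ {ω | C + M ≤ Z ω} ≤ ENNReal.ofReal (H * Real.exp (-α * M))

lemma HasExpTail.measure_le [IsProbabilityMeasure μ] {Z : Ω → ℝ} {C H α : ℝ}
    (hZ : HasExpTail μ Z C H α) (hH : 0 ≤ H) (hα : 0 ≤ α) (M : ℝ) :
    μ {ω | C + M ≤ Z ω} ≤ ENNReal.ofReal ((1 + H) * Real.exp (-α * M)) := by
  rcases le_or_gt 0 M with hM | hM
  · refine (hZ M hM).trans (ENNReal.ofReal_le_ofReal ?_)
    gcongr
    linarith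
  · have hexp : 1 ≤ Real.exp (-α * M) := Real.one_le_exp (by nlinarith)
    exact prob_le_one.trans (ENNReal.one_le_ofReal.2 (by nlinarith))

lemma measure_le_card_le_rpow [IsProbabilityMeasure μ] {Z : ι → Ω → ℝ}
    {C H α a b D H₀ : ℝ} {n m : ℕ} (hm : m ≠ 0) (hmn : m ≤ n) (hk : k ≠ 0)
    (hH : 0 ≤ H) (hα : 0 ≤ α) (ha : 0 ≤ a) (hb : 0 ≤ b) (hH₀ : 0 ≤ H₀)
    (hZ : ∀ i ∈ J, HasExpTail μ (Z i) C H α) (hSJ : ∀ ω, S ω ⊆ J)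
    (hB : μ B ≤ ENNReal.ofReal (H₀ * Real.exp (-a * logFactor n m)))
    (hSZ : ∀ ω ∉ B, ∀ i ∈ S ω, C + (b * logFactor n m - D) ≤ Z i ω) :
    μ {ω | k ≤ (S ω).card} ≤ ENNReal.ofReal ((H₀ + (1 + H) * Real.exp (α * D)) / k * J.card *
      ((n : ℝ) / m) ^ (-min a (α * b))) := by
  set L := logFactor n m
  set r := ((n : ℝ) / m) ^ (-min a (α * b))
  have hbad : Real.exp (-a * L) ≤ r :=
    exp_neg_mul_logFactor_le_rpow hm hmn (by positivity) (min_le_left _ _)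
  have hnoise : Real.exp (-α * (b * L - D)) ≤ Real.exp (α * D) * r := by
    rw [show -α * (b * L - D) = α * D + -(α * b) * L by ring, Real.exp_add]
    gcongr
    exact exp_neg_mul_logFactor_le_rpow hm hmn (by positivity) (min_le_right _ _)
  have hk' : (0 : ℝ) < k := by positivity
  calc μ {ω | k ≤ (S ω).card}
      ≤ (μ B + ENNReal.ofReal ((1 + H) * Real.exp (-α * (b * L - D)))) * (J.card / k) :=
        measure_le_card_le_of_subset hk hSJ hSZ fun i hi => (hZ i hi).measure_le hH hα _
    _ ≤ (ENNReal.ofReal (H₀ * r) + ENNReal.ofReal ((1 + H) * (Real.exp (α * D) * r))) *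
          (J.card / k) := by
        gcongr
        exact hB.trans (by gcongr)
    _ = ENNReal.ofReal ((H₀ * r + (1 + H) * (Real.exp (α * D) * r)) * (J.card / k)) := by
        rw [← ENNReal.ofReal_add (by positivity) (by positivity),
          ENNReal.ofReal_mul (by positivity), ENNReal.ofReal_div_of_pos hk',
          ENNReal.ofReal_natCast, ENNReal.ofReal_natCast]
    _ = _ := by congr 1; ring

end RandomFinset

section ErrorRates

variable {n k : ℕ} {σ C H α K A H₀ : ℝ} {μ : Measure (Fin n → ℝ)} [IsProbabilityMeasure μ]
  {θ : Fin n → ℝ} {Itil : (Fin n → ℝ) → Finset (Fin n)} {J : Finset (Fin n)}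

theorem measure_le_card_ihat_sdiff_le {α₀ M ε : ℝ} (hσ : σ ≠ 0) (hA : 0 ≤ A) (hC : 0 ≤ C)
    (hK : 0 ≤ K) (hM : 0 ≤ M) (hε : 0 < ε) (hAK : A + C / 2 ≤ K / 2 * (1 - ε))
    (hH : 0 ≤ H) (hα : 0 ≤ α) (hα₀ : 0 ≤ α₀) (hH₀ : 0 ≤ H₀) (hk : k ≠ 0)
    (hnoise : ∀ i, HasExpTail μ (fun x => ((x i - θ i) / σ) ^ 2) C H α)
    (hJ : IsPenalizedMinimizer (A * σ ^ 2) θ J)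
    (hover : ∀ t : ℝ, 0 ≤ t → μ {x | M * J.card + t ≤ ((Itil x).card : ℝ)}
      ≤ ENNReal.ofReal (H₀ * Real.exp (-α₀ * ell n J.card - α₀ * t / 2))) :
    μ {x | k ≤ (ihat K σ Itil x \ J).card} ≤ ENNReal.ofReal
      ((H₀ + (1 + H) * Real.exp (α * (K / 2 * Real.log ((M + 1) / ε)))) / k * (n - J.card) *
        ((n : ℝ) / ↑(max J.card 1)) ^ (-min (α₀ / 2) (α * (K / 2 * (1 - ε) - A - C / 2)))) := by
  have hJn : J.card ≤ n := by simpa using card_le_univ J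
  have hsub x : ihat K σ Itil x \ J ⊆ Jᶜ := fun i hi => mem_compl.2 (mem_sdiff.1 hi).2
  have hcompl : Jᶜ.card = n - J.card := by simp [card_compl]
  rcases eq_or_ne n 0 with hn | hn
  · simp [setOf_le_card_eq_empty (k := k) hsub (by omega)]
  have hmn : max J.card 1 ≤ n := by omega
  set m := max J.card 1
  have hm : m ≠ 0 := by omega
  have hL : 0 ≤ logFactor n m := zero_le_two.trans (two_le_logFactor hm hmn)
  have hbad : μ {x | M * J.card + logFactor n m ≤ ((Itil x).card : ℝ)}
      ≤ ENNReal.ofReal (H₀ * Real.exp (-(α₀ / 2) * logFactor n m)) := by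
    refine (hover _ hL).trans ?_
    gcongr
    linarith [mul_nonneg hα₀ (ell_nonneg_s7 hJn)]
  rw [← Nat.cast_sub hJn, ← hcompl]
  exact measure_le_card_le_rpow hm hmn hk hH hα (by positivity) (by linarith) hH₀
    (fun i _ => hnoise i) hsub hbad fun x hx i hi =>
      hJ.le_sq_noise_of_mem_ihat_sdiff hσ hA hC hK hM hε (not_le.1 hx).le hi

theorem measure_le_card_sdiff_ihat_le {α₁ δ : ℝ} (hσ : σ ≠ 0) (hA : 0 ≤ A) (hC : 0 ≤ C)
    (hK : 0 ≤ K) (hδ : 0 < δ) (hKA : K / 2 + C / 2 ≤ A / 6)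
    (hH : 0 ≤ H) (hα : 0 ≤ α) (hα₁ : 0 ≤ α₁) (hH₀ : 0 ≤ H₀) (hk : k ≠ 0)
    (hnoise : ∀ i, HasExpTail μ (fun x => ((x i - θ i) / σ) ^ 2) C H α)
    (hJ : IsPenalizedMinimizer (A * σ ^ 2) θ J)
    (hunder : μ {x | ((Itil x).card : ℝ) ≤ δ * J.card}
      ≤ ENNReal.ofReal (H₀ * Real.exp (-α₁ * ell n J.card))) :
    μ {x | k ≤ (J \ ihat K σ Itil x).card} ≤ ENNReal.ofReal
      ((H₀ + (1 + H) * Real.exp (α * (K / 2 * Real.log δ⁻¹))) / k * J.card *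
        ((n : ℝ) / ↑(max J.card 1)) ^ (-min α₁ (α * (A / 6 - K / 2 - C / 2)))) := by
  have hJn : J.card ≤ n := by simpa using card_le_univ J
  have hsub x : J \ ihat K σ Itil x ⊆ J := sdiff_subset
  rcases eq_or_ne J.card 0 with hJ₀ | hJ₀
  · simp [setOf_le_card_eq_empty (k := k) hsub (by omega)]
  have hbad : μ {x | ((Itil x).card : ℝ) ≤ δ * J.card}
      ≤ ENNReal.ofReal (H₀ * Real.exp (-α₁ * logFactor n J.card)) := by
    refine hunder.trans ?_
    gcongr ENNReal.ofReal (H₀ * Real.exp ?_)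
    exact mul_le_mul_of_nonpos_left (logFactor_le_ell hJ₀ hJn) (by linarith)
  rw [max_eq_left (Nat.one_le_iff_ne_zero.2 hJ₀)]
  exact measure_le_card_le_rpow hJ₀ hJn hk hH hα hα₁ (by linarith) hH₀
    (fun i _ => hnoise i) hsub hbad fun x hx i hi =>
      hJ.le_sq_noise_of_mem_sdiff_ihat hσ hA hC hK hδ (not_le.1 hx).le hi

end ErrorRates

theorem stmt_7 (Cξ Hξ αξ : ℝ) (hCξ : 0 < Cξ) (hHξ : 0 < Hξ) (hαξ : 0 < αξ)
    (K A₀ A₁ α₀ α₁' M₁ δ : ℝ)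
    (hK : 0 < K) (hA₀ : 0 < A₀) (hA₁ : 0 < A₁) (hα₀ : 0 < α₀) (hα₁' : 0 < α₁')
    (hM₁ : 1 < M₁) (hδ : 0 < δ) (hδ1 : δ < 1) (hA01 : A₀ ≤ A₁)
    (hKC : A₀ + Cξ < K / 2)
    (hA1big : K / 2 + αξ⁻¹ * ((Cξ * αξ + 2) / 2 + 1) < A₁ / 6) :
    ∃ H₁ α₂ H₂ α₃ : ℝ, 0 < H₁ ∧ 0 < α₂ ∧ 0 < H₂ ∧ 0 < α₃ ∧
      ∀ (n : ℕ) (σ : ℝ), 0 < σ →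
        ∀ P : (Fin n → ℝ) → Measure (Fin n → ℝ),
          (∀ θ, IsProbabilityMeasure (P θ)) →
          (∀ (θ : Fin n → ℝ) (I : Finset (Fin n)) (M : ℝ), 0 ≤ M →
              P θ {x | Cξ * I.card + M ≤ ∑ i ∈ I, ((x i - θ i) / σ) ^ 2}
                ≤ ENNReal.ofReal (Hξ * Real.exp (-αξ * M))) →
          ∀ Itil : (Fin n → ℝ) → Finset (Fin n),
            (∀ (x : Fin n → ℝ) (I : Finset (Fin n)),
                (∑ i ∈ (Itil x)ᶜ, x i ^ 2) + K * σ ^ 2 * ell n (Itil x).card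
                  ≤ (∑ i ∈ Iᶜ, x i ^ 2) + K * σ ^ 2 * ell n I.card) →
            ∀ Istar : ℝ → (Fin n → ℝ) → Finset (Fin n),
              (∀ (A : ℝ) (θ : Fin n → ℝ), 0 < A → ∀ I : Finset (Fin n),
                  (∑ i ∈ (Istar A θ)ᶜ, θ i ^ 2) + A * σ ^ 2 * ell n (Istar A θ).card
                    ≤ (∑ i ∈ Iᶜ, θ i ^ 2) + A * σ ^ 2 * ell n I.card) →
              (∀ (θ : Fin n → ℝ) (M : ℝ), 0 ≤ M →
                  P θ {x | M₁ * (Istar A₀ θ).card + M ≤ ((Itil x).card : ℝ)}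
                    ≤ ENNReal.ofReal (Hξ / (1 - Real.exp (-1)) *
                        Real.exp (-α₀ * ell n (Istar A₀ θ).card - α₀ * M / 2))) →
              (∀ θ : Fin n → ℝ,
                  P θ {x | ((Itil x).card : ℝ) ≤ δ * (Istar A₁ θ).card}
                    ≤ ENNReal.ofReal (Hξ / (1 - Real.exp (-1)) *
                        Real.exp (-α₁' * ell n (Istar A₁ θ).card))) →
              ∀ (k : ℕ), 1 ≤ k → ∀ θ : Fin n → ℝ,
                P θ {x | k ≤ (ihat K σ Itil x \ Istar A₀ θ).card}
                    ≤ ENNReal.ofReal ((H₁ / k) * ((n : ℝ) - (Istar A₀ θ).card) *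
                        ((n : ℝ) / (↑(max (Istar A₀ θ).card 1))) ^ (-α₂)) ∧
                  P θ {x | k ≤ (Istar A₁ θ \ ihat K σ Itil x).card}
                    ≤ ENNReal.ofReal ((H₂ / k) * ((Istar A₁ θ).card : ℝ) *
                        ((n : ℝ) / (↑(max (Istar A₁ θ).card 1))) ^ (-α₃)) := by
  have hH₀ : 0 < Hξ / (1 - Real.exp (-1)) := div_pos hHξ (by simp)
  -- This `ε` spends half of the margin `K / 2 - A₀ - Cξ / 2` on the threshold loss `K / 2 * ε`.
  obtain ⟨ε, hε, hεK⟩ : ∃ ε > 0, K / 2 * ε = (K / 2 - A₀ - Cξ / 2) / 2 :=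
    ⟨(K / 2 - A₀ - Cξ / 2) / K, div_pos (by linarith) hK, by field_simp⟩
  have hFWER : 0 < K / 2 * (1 - ε) - A₀ - Cξ / 2 := by linarith
  have hNDR : 0 < A₁ / 6 - K / 2 - Cξ / 2 := by
    have hMξ : αξ⁻¹ * ((Cξ * αξ + 2) / 2 + 1) = Cξ / 2 + 2 * αξ⁻¹ := by field_simp; ring
    linarith [inv_pos.2 hαξ]
  refine ⟨Hξ / (1 - Real.exp (-1)) +
      (1 + Hξ) * Real.exp (αξ * (K / 2 * Real.log ((M₁ + 1) / ε))),
    min (α₀ / 2) (αξ * (K / 2 * (1 - ε) - A₀ - Cξ / 2)),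
    Hξ / (1 - Real.exp (-1)) + (1 + Hξ) * Real.exp (αξ * (K / 2 * Real.log δ⁻¹)),
    min α₁' (αξ * (A₁ / 6 - K / 2 - Cξ / 2)),
    by positivity, by positivity, by positivity, by positivity, ?_⟩
  intro n σ hσ P hP hnoise Itil _ Istar hIstar hover hunder k hk θ
  have := hP θ
  have htail i : HasExpTail (P θ) (fun x => ((x i - θ i) / σ) ^ 2) Cξ Hξ αξ := fun M hM => by
    simpa using hnoise θ {i} M hM
  exact ⟨measure_le_card_ihat_sdiff_le hσ.ne' hA₀.le hCξ.le hK.le (by linarith) hε (by linarith)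
      hHξ.le hαξ.le hα₀.le hH₀.le (by omega) htail (hIstar A₀ θ hA₀) (hover θ),
    measure_le_card_sdiff_ihat_le hσ.ne' hA₁.le hCξ.le hK.le hδ (by linarith)
      hHξ.le hαξ.le hα₁'.le hH₀.le (by omega) htail (hIstar A₁ θ hA₁) (hunder θ)⟩
end
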